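/- Hajós's theorem: if Λ ⊂ ℝ^d is a unimodular lattice such that the only lattice point in the open cube (−1,1)^d is the origin, then Λ contains at least one of the standard basis vectors e_1, …, e_d. -/

import Mathlib

def IsUnimodularLattice (d : ℕ) (Λ : Set (Fin d → ℝ)) : Prop :=
  ∃ g : Matrix (Fin d) (Fin d) ℝ, g.det = 1 ∧
    Λ = {x | ∃ v : Fin d → ℤ, x = g.mulVec (fun i => (v i : ℝ))}

open ArithmeticFunction in
theorem cardFactors_relIndex_trans {Γ : Type*} [Group Γ] [Finite Γ] {H K L : Subgroup Γ}
    (hHK : H ≤ K) (hKL : K ≤ L) :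
    cardFactors (H.relIndex L) = cardFactors (H.relIndex K) + cardFactors (K.relIndex L) := by
  rw [← Subgroup.relIndex_mul_relIndex H K L hHK hKL]
  have := Subgroup.isFiniteRelIndex_of_finiteIndex (H := H) (K := K)
  have := Subgroup.isFiniteRelIndex_of_finiteIndex (H := K) (K := L)
  exact cardFactors_mul Subgroup.relIndex_ne_zero Subgroup.relIndex_ne_zero

theorem Subgroup.inf_relIndex_inf {Γ : Type*} [Group Γ] (A B L : Subgroup Γ) :
    (A ⊓ L).relIndex (B ⊓ L) = A.relIndex (B ⊓ L) := by
  rw [← inf_relIndex_right, ← inf_relIndex_right A, inf_assoc,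
    inf_of_le_right (inf_le_right : B ⊓ L ≤ L)]

/-- A set that is stable under `K` and that meets cosets in a controlled way: the sets by which
characters are classified in the proof of Hajós's theorem are of this kind. -/
structure IsPiece {Γ : Type*} [Group Γ] (C : Set Γ) (K : Subgroup Γ) : Prop where
  mul_mem : ∀ x ∈ C, ∀ k ∈ K, x * k ∈ C
  le_of_coset_subset : ∀ x, ∀ L : Subgroup Γ, (∀ l ∈ L, x * l ∈ C) → L ≤ K
  exists_disjoint_coset : ∀ x, ∀ L : Subgroup Γ, (∃ l ∈ L, x * l ∈ C) → (∃ l ∈ L, x * l ∉ C) →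
    ∃ M ≤ L, (M.relIndex L).Prime ∧ ∃ y ∈ L, ∀ m ∈ M, x * y * m ∉ C

/-- The sets `C i`, `i ∈ S`, cover the coset `x * L`, and none of them can be left out. -/
structure IsIrredundantCover {Γ ι : Type*} [Group Γ] (C : ι → Set Γ) (S : Finset ι) (x : Γ)
    (L : Subgroup Γ) : Prop where
  cover : ∀ l ∈ L, ∃ i ∈ S, x * l ∈ C i
  irredundant : ∀ i ∈ S, ∃ l ∈ L, ∀ j ∈ S, x * l ∈ C j → j = i

theorem exists_isIrredundantCover {Γ ι : Type*} [Group Γ] {C : ι → Set Γ} {x : Γ}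
    {L : Subgroup Γ} (S : Finset ι) (h : ∀ l ∈ L, ∃ i ∈ S, x * l ∈ C i) :
    ∃ T ⊆ S, IsIrredundantCover C T x L := by
  classical
  induction S using Finset.strongInduction with
  | H S ih =>
    by_cases hS : ∀ i ∈ S, ∃ l ∈ L, ∀ j ∈ S, x * l ∈ C j → j = i
    · exact ⟨S, subset_rfl, h, hS⟩
    · push Not at hS
      obtain ⟨i, hi, hi'⟩ := hS
      obtain ⟨T, hT, hcov⟩ := ih (S.erase i) (Finset.erase_ssubset hi) fun l hl ↦ by
        obtain ⟨j, hj, hjC, hne⟩ := hi' l hl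
        exact ⟨j, Finset.mem_erase.2 ⟨hne, hj⟩, hjC⟩
      exact ⟨T, hT.trans (Finset.erase_subset _ _), hcov⟩

open ArithmeticFunction in
/-- A coset in a finite group that is irredundantly covered by `n` pieces has relative index with
fewer than `n` prime factors over the stabilizer of all the pieces. -/
theorem IsIrredundantCover.cardFactors_relIndex_lt {Γ ι : Type*} [Group Γ] [Finite Γ]
    {C : ι → Set Γ} {K : ι → Subgroup Γ} (hC : ∀ i, IsPiece (C i) (K i)) {S : Finset ι} {x : Γ}
    {L : Subgroup Γ} (h : IsIrredundantCover C S x L) :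
    cardFactors ((⨅ i ∈ S, K i).relIndex L) < S.card := by
  classical
  induction S using Finset.strongInduction generalizing x L with
  | H S ih =>
  have inf_union (A B : Finset ι) : ⨅ i ∈ A ∪ B, K i = (⨅ i ∈ A, K i) ⊓ ⨅ i ∈ B, K i :=
    Finset.iInf_union
  -- Passing from a nonempty subfamily to the whole family.
  have step : ∀ n, ∀ R ⊂ S, R.Nonempty → (S \ R).card = n →
      cardFactors ((⨅ i ∈ S, K i).relIndex ((⨅ i ∈ R, K i) ⊓ L)) + R.card < S.card := by
    intro n
    induction n using Nat.strong_induction_on with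
    | _ n ihn =>
    intro R hRS hR hn
    obtain ⟨i, hiS, hiR⟩ := Finset.exists_of_ssubset hRS
    obtain ⟨l, hl, hpriv⟩ := h.irredundant i hiS
    obtain ⟨T, hTS, hT⟩ := exists_isIrredundantCover (C := C) (x := x * l)
      (L := (⨅ i ∈ R, K i) ⊓ L) (S \ R) fun k hk ↦ by
        obtain ⟨hkR, hkL⟩ := Subgroup.mem_inf.1 hk
        obtain ⟨j, hjS, hj⟩ := h.cover (l * k) (mul_mem hl hkL)
        refine ⟨j, Finset.mem_sdiff.2 ⟨hjS, fun hjR ↦ hiR ?_⟩, by rwa [mul_assoc]⟩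
        have hkj : k ∈ K j := by
          simp only [Subgroup.mem_iInf] at hkR
          exact hkR j hjR
        have := (hC j).mul_mem _ hj _ (inv_mem hkj)
        rw [← mul_assoc, mul_inv_cancel_right] at this
        rwa [← hpriv j hjS this]
    have hTR : Disjoint T R := Finset.disjoint_left.2 fun a ha ↦ (Finset.mem_sdiff.1 (hTS ha)).2
    have hTS' : T ⊆ S := hTS.trans Finset.sdiff_subset
    have hTss : T ⊂ S := by
      refine hTS'.ssubset_of_ne ?_
      rintro rfl
      obtain ⟨r, hr⟩ := hR
      exact Finset.disjoint_left.1 hTR (hRS.1 hr) hr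
    have hTlt := ih T hTss hT
    have hcard : (R ∪ T).card = R.card + T.card := Finset.card_union_of_disjoint hTR.symm
    have hTR' : (⨅ i ∈ R ∪ T, K i).relIndex ((⨅ i ∈ R, K i) ⊓ L) =
        (⨅ i ∈ T, K i).relIndex ((⨅ i ∈ R, K i) ⊓ L) := by
      rw [inf_union, ← Subgroup.inf_relIndex_right, ← Subgroup.inf_relIndex_right (⨅ i ∈ T, K i)]
      congr 1
      apply le_antisymm
      · exact le_inf (inf_le_left.trans inf_le_right) inf_le_right
      · exact le_inf (le_inf (inf_le_right.trans inf_le_left) inf_le_left) inf_le_right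
    rcases (Finset.union_subset hRS.1 hTS').eq_or_ssubset with heq | hss
    · rw [← heq, hTR', hcard]
      omega
    · have h1 := ihn (S \ (R ∪ T)).card (by
        rw [← hn]
        refine Finset.card_lt_card (Finset.ssubset_iff_subset_ne.2
          ⟨Finset.sdiff_subset_sdiff subset_rfl Finset.subset_union_left, fun he ↦ ?_⟩)
        have : T.card ≠ 0 := by omega
        obtain ⟨t, ht⟩ := Finset.card_pos.1 (Nat.pos_of_ne_zero this)
        have := hTS ht
        rw [← he] at this
        exact (Finset.mem_sdiff.1 this).2 (Finset.mem_union_right _ ht)) (R ∪ T) hss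
        (hR.mono Finset.subset_union_left) rfl
      have hle : (⨅ i ∈ R ∪ T, K i) ⊓ L ≤ (⨅ i ∈ R, K i) ⊓ L :=
        inf_le_inf_right _ (inf_union R T ▸ inf_le_left)
      have hSle : ⨅ i ∈ S, K i ≤ ⨅ i ∈ R ∪ T, K i :=
        biInf_mono fun i hi ↦ hss.1 hi
      have h2 := cardFactors_relIndex_trans
        (inf_le_inf_right L hSle : (⨅ i ∈ S, K i) ⊓ L ≤ _) hle
      rw [Subgroup.inf_relIndex_inf, Subgroup.inf_relIndex_inf, Subgroup.inf_relIndex_inf,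
        hTR'] at h2
      omega
  obtain ⟨i, hiS, -⟩ := h.cover 1 (one_mem L)
  obtain ⟨l, hl, hpriv⟩ := h.irredundant i hiS
  have hli : x * l ∈ C i := by
    obtain ⟨j, hj, hjC⟩ := h.cover l hl
    rwa [← hpriv j hj hjC]
  by_cases hfull : ∀ l ∈ L, x * l ∈ C i
  · have hS : S = {i} := by
      refine Finset.eq_singleton_iff_unique_mem.2 ⟨hiS, fun j hj ↦ ?_⟩
      obtain ⟨k, hk, hkp⟩ := h.irredundant j hj
      exact (hkp i hiS (hfull k hk)).symm
    have hLK := (hC i).le_of_coset_subset x L hfull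
    simp [hS, Subgroup.relIndex_eq_one.2 hLK]
  · push Not at hfull
    obtain ⟨M, hML, hp, y, hy, hM⟩ := (hC i).exists_disjoint_coset x L ⟨l, hl, hli⟩ hfull
    obtain ⟨T, hTS, hT⟩ := exists_isIrredundantCover (C := C) (x := x * y) (L := M)
      (S.erase i) fun m hm ↦ by
        obtain ⟨j, hj, hjC⟩ := h.cover (y * m) (mul_mem hy (hML hm))
        rw [← mul_assoc] at hjC
        exact ⟨j, Finset.mem_erase.2 ⟨by rintro rfl; exact hM m hm hjC, hj⟩, hjC⟩
    have hTss : T ⊂ S := hTS.trans_ssubset (Finset.erase_ssubset hiS)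
    have h1 := ih T hTss hT
    have h2 := step _ T hTss (Finset.card_pos.1 (by omega)) rfl
    have h3 := cardFactors_relIndex_trans (inf_le_right : (⨅ i ∈ T, K i) ⊓ M ≤ M) hML
    rw [Subgroup.inf_relIndex_right, cardFactors_apply_prime hp] at h3
    have h4 := cardFactors_relIndex_trans
      (inf_le_inf_left (⨅ i ∈ T, K i) hML) (inf_le_right : (⨅ i ∈ T, K i) ⊓ L ≤ L)
    have h5 := cardFactors_relIndex_trans (H := (⨅ i ∈ S, K i) ⊓ L)
      (inf_le_inf_right L (biInf_mono fun i hi ↦ hTss.1 hi) : _ ≤ (⨅ i ∈ T, K i) ⊓ L) inf_le_right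
    rw [Subgroup.inf_relIndex_right, Subgroup.inf_relIndex_inf] at h5
    omega

theorem relIndex_ker_of_pow_eq_one {Γ : Type*} [Group Γ] {f : Γ →* ℂˣ} {L : Subgroup Γ} {p : ℕ}
    (hp : p.Prime) (hpow : ∀ l ∈ L, f l ^ p = 1) (hL : ¬ L ≤ f.ker) :
    f.ker.relIndex L = p ∧ ∀ z : ℂˣ, z ^ p = 1 → ∃ l ∈ L, f l = z := by
  have : NeZero p := ⟨hp.ne_zero⟩
  have hle : L.map f ≤ rootsOfUnity p ℂ := by
    rintro _ ⟨l, hl, rfl⟩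
    exact hpow l hl
  have hcard : Nat.card (rootsOfUnity p ℂ) = p := Complex.card_rootsOfUnity p
  have hdvd : Nat.card (L.map f) ∣ p := hcard ▸ Subgroup.card_dvd_of_le hle
  have hne : Nat.card (L.map f) ≠ 1 := by
    rwa [Ne, ← Subgroup.eq_bot_iff_card, Subgroup.map_eq_bot_iff]
  have heq := (hp.eq_one_or_self_of_dvd _ hdvd).resolve_left hne
  refine ⟨(Subgroup.relIndex_ker L f).trans heq, fun z hz ↦ ?_⟩
  have : L.map f = rootsOfUnity p ℂ := Subgroup.eq_of_le_of_card_ge hle (by rw [heq, hcard])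
  exact (this ▸ hz : z ∈ L.map f)

theorem exists_le_relIndex_prime {Γ : Type*} [Group Γ] [Finite Γ] {f : Γ →* ℂˣ}
    {L : Subgroup Γ} (hL : ¬ L ≤ f.ker) :
    ∃ M ≤ L, (M.relIndex L).Prime ∧ f.ker ⊓ L ≤ M := by
  classical
  have hex : ∃ n, 0 < n ∧ ∀ l ∈ L, f l ^ n = 1 :=
    ⟨Nat.card Γ, Nat.card_pos, fun l _ ↦ by rw [← map_pow, pow_card_eq_one', map_one]⟩
  obtain ⟨hn, hpow⟩ := Nat.find_spec hex
  set n := Nat.find hex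
  have hn1 : n ≠ 1 := fun h ↦ hL fun l hl ↦ by simpa [h] using hpow l hl
  have hp := Nat.minFac_prime hn1
  set p := n.minFac
  have hpn : n / p * p = n := Nat.div_mul_cancel (Nat.minFac_dvd n)
  have hlt : n / p < n := Nat.div_lt_self hn hp.one_lt
  have hpos : 0 < n / p := Nat.div_pos (Nat.minFac_le hn) hp.pos
  have hmin : ¬ L ≤ (f ^ (n / p)).ker := fun h ↦ Nat.find_min hex hlt ⟨hpos, fun l hl ↦ h hl⟩
  refine ⟨(f ^ (n / p)).ker ⊓ L, inf_le_right, ?_, inf_le_inf_right L fun l hl ↦ ?_⟩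
  · rw [Subgroup.inf_relIndex_right, (relIndex_ker_of_pow_eq_one hp (fun l hl ↦ ?_) hmin).1]
    · exact hp
    · rw [MonoidHom.pow_apply, ← pow_mul, hpn, hpow l hl]
  · rw [MonoidHom.mem_ker] at hl ⊢
    rw [MonoidHom.pow_apply, hl, one_pow]

/-- A fibre of `f` over `L` that is proper misses a coset of prime index. -/
theorem exists_coset_ne {Γ : Type*} [Group Γ] [Finite Γ] {f : Γ →* ℂˣ}
    {L : Subgroup Γ} (hL : ¬ L ≤ f.ker) (z : ℂˣ) :
    ∃ M ≤ L, (M.relIndex L).Prime ∧ ∃ y ∈ L, ∀ m ∈ M, f (y * m) ≠ z := by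
  obtain ⟨M, hML, hp, hM⟩ := exists_le_relIndex_prime hL
  refine ⟨M, hML, hp, ?_⟩
  by_cases hz : ∃ u ∈ L, f u = z
  · obtain ⟨u, hu, rfl⟩ := hz
    obtain ⟨k, hk, hkM⟩ : ∃ k ∈ L, k ∉ M := by
      by_contra! h
      exact hp.ne_one (Subgroup.relIndex_eq_one.2 h)
    refine ⟨u * k, mul_mem hu hk, fun m hm h ↦ hkM ?_⟩
    have : k * m ∈ M := hM ⟨by simpa [mul_assoc] using h, mul_mem hk (hML hm)⟩
    exact (mul_mem_cancel_right hm).1 this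
  · exact ⟨1, one_mem L, fun m hm h ↦ hz ⟨m, hML hm, by simpa using h⟩⟩

theorem isPiece_ker {Γ : Type*} [Group Γ] [Finite Γ] (f : Γ →* ℂˣ) :
    IsPiece {x | f x = 1} f.ker where
  mul_mem x hx k hk := by
    rw [Set.mem_ofPred_eq] at hx ⊢
    rw [map_mul, hx, MonoidHom.mem_ker.1 hk, one_mul]
  le_of_coset_subset x L h l hl := by
    have h1 : f (x * 1) = 1 := h 1 (one_mem L)
    have h2 : f (x * l) = 1 := h l hl
    rw [mul_one] at h1
    rwa [map_mul, h1, one_mul] at h2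
  exists_disjoint_coset x L := by
    rintro ⟨u, hu, hxu⟩ ⟨w, hw, hxw⟩
    have hL : ¬ L ≤ f.ker := fun h ↦ hxw <| by
      rw [Set.mem_ofPred_eq, map_mul, MonoidHom.mem_ker.1 (h hu)] at hxu
      rwa [Set.mem_ofPred_eq, map_mul, MonoidHom.mem_ker.1 (h hw)]
    obtain ⟨M, hML, hp, y, hy, hM⟩ := exists_coset_ne hL (f x)⁻¹
    refine ⟨M, hML, hp, y, hy, fun m hm h ↦ hM m hm ?_⟩
    rw [Set.mem_ofPred_eq, mul_assoc, map_mul] at h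
    exact eq_inv_of_mul_eq_one_right h

theorem isPiece_ker_pow_diff_ker {Γ : Type*} [Group Γ] [Finite Γ] (f : Γ →* ℂˣ) {q : ℕ}
    (hq : q.Prime) : IsPiece {x | f x ^ q = 1 ∧ f x ≠ 1} f.ker where
  mul_mem x hx k hk := by
    rw [Set.mem_ofPred_eq] at hx ⊢
    rwa [map_mul, MonoidHom.mem_ker.1 hk, mul_one]
  le_of_coset_subset x L h := by
    by_contra hL
    have hpow : ∀ l ∈ L, f l ^ q = 1 := fun l hl ↦ by
      have h1 := (h 1 (one_mem L)).1
      have h2 := (h l hl).1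
      rw [mul_one] at h1
      rwa [map_mul, mul_pow, h1, one_mul] at h2
    have h1 := (h 1 (one_mem L)).1
    rw [mul_one] at h1
    obtain ⟨l, hl, hxl⟩ := (relIndex_ker_of_pow_eq_one hq hpow hL).2 (f x)⁻¹ (by simp [h1])
    exact (h l hl).2 (by simp [hxl])
  exists_disjoint_coset x L := by
    rintro ⟨u, hu, hxu⟩ ⟨w, hw, hxw⟩
    by_cases hL : L ≤ (f ^ q).ker
    · have hpow : ∀ l ∈ L, f l ^ q = 1 := fun l hl ↦ hL hl
      have hx : f x ^ q = 1 := by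
        have := hxu.1
        rwa [map_mul, mul_pow, hpow u hu, mul_one] at this
      have hw1 : f (x * w) = 1 := by
        by_contra hne
        exact hxw ⟨by rw [map_mul, mul_pow, hx, hpow w hw, one_mul], hne⟩
      have hker : ¬ L ≤ f.ker := fun h ↦ hxu.2 <| by
        rw [← hw1, map_mul, map_mul, MonoidHom.mem_ker.1 (h hu), MonoidHom.mem_ker.1 (h hw)]
      refine ⟨f.ker ⊓ L, inf_le_right, ?_, w, hw, fun m hm h ↦ h.2 ?_⟩
      · rw [Subgroup.inf_relIndex_right, (relIndex_ker_of_pow_eq_one hq hpow hker).1]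
        exact hq
      · rw [map_mul, hw1, MonoidHom.mem_ker.1 hm.1, one_mul]
    · obtain ⟨M, hML, hp, y, hy, hM⟩ := exists_coset_ne hL ((f ^ q) x)⁻¹
      refine ⟨M, hML, hp, y, hy, fun m hm h ↦ hM m hm ?_⟩
      have h1 : (f ^ q) (x * (y * m)) = 1 := by simpa [mul_assoc] using h.1
      rw [map_mul] at h1
      exact eq_inv_of_mul_eq_one_right h1

/-- Evaluation of characters at `a`, as a homomorphism into the units of `ℂ`. -/
noncomputable def AddChar.evalUnits {G : Type*} [AddCommGroup G] (a : G) :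
    AddChar G ℂ →* ℂˣ :=
  MonoidHom.toHomUnits
    { toFun := fun χ ↦ χ a, map_one' := rfl, map_mul' := fun _ _ ↦ rfl }

theorem AddChar.coe_evalUnits {G : Type*} [AddCommGroup G] (a : G) (χ : AddChar G ℂ) :
    (AddChar.evalUnits a χ : ℂ) = χ a :=
  rfl

theorem AddChar.evalUnits_eq_one {G : Type*} [AddCommGroup G] {a : G} {χ : AddChar G ℂ} :
    AddChar.evalUnits a χ = 1 ↔ χ a = 1 := by
  rw [← Units.val_inj, coe_evalUnits, Units.val_one]

theorem AddChar.evalUnits_pow_eq_one {G : Type*} [AddCommGroup G] {a : G} {χ : AddChar G ℂ}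
    {n : ℕ} : AddChar.evalUnits a χ ^ n = 1 ↔ χ a ^ n = 1 := by
  rw [← Units.val_inj, Units.val_pow_eq_pow_val, coe_evalUnits, Units.val_one]

/-- The annihilator of `B` in the dual group has index `Nat.card B`. -/
theorem AddChar.index_eq_card_of_annihilator {G : Type*} [AddCommGroup G] [Finite G]
    (B : AddSubgroup G) (D : Subgroup (AddChar G ℂ)) (hD : ∀ χ, χ ∈ D ↔ ∀ b ∈ B, χ b = 1) :
    D.index = Nat.card B := by
  have card_dual (H : Type _) [AddCommGroup H] [Finite H] :
      Nat.card (AddChar H ℂ) = Nat.card H := by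
    have := Fintype.ofFinite H
    rw [← Fintype.card_eq_nat_card, ← Fintype.card_eq_nat_card, AddChar.card_eq]
  let F : AddChar (G ⧸ B) ℂ → D := fun ψ ↦ ⟨ψ.compAddMonoidHom (QuotientAddGroup.mk' B),
    (hD _).2 fun b hb ↦ by
      rw [compAddMonoidHom_apply, QuotientAddGroup.mk'_apply,
        (QuotientAddGroup.eq_zero_iff b).2 hb, map_zero_eq_one]⟩
  have hF : Function.Bijective F := by
    refine ⟨fun ψ φ h ↦ ?_, fun χ ↦ ?_⟩
    · exact compAddMonoidHom_injective_left _ (QuotientAddGroup.mk'_surjective B)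
        (congrArg Subtype.val h)
    · have hχ := (hD χ).1 χ.2
      refine ⟨toAddMonoidHomEquiv.symm (QuotientAddGroup.lift B (χ : AddChar G ℂ).toAddMonoidHom
        fun b hb ↦ ?_), Subtype.ext (AddChar.ext _ _ fun g ↦ rfl)⟩
      simp [hχ b hb]
  have h1 : Nat.card D = Nat.card (G ⧸ B) :=
    (Nat.card_congr (Equiv.ofBijective F hF)).symm.trans (card_dual _)
  have h2 := D.card_mul_index
  rw [card_dual, h1, ← B.card_mul_index, AddSubgroup.index, mul_comm] at h2
  exact Nat.eq_of_mul_eq_mul_right Nat.card_pos h2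

/-- Exponent vectors `k` with `k j < q j` that are supported on `T`. -/
def expBox {ι : Type*} [Fintype ι] [DecidableEq ι] (q : ι → ℕ) (T : Finset ι) :
    Finset (ι → ℕ) :=
  Fintype.piFinset fun j ↦ Finset.range (if j ∈ T then q j else 1)

section expBox
variable {ι : Type*} [Fintype ι] [DecidableEq ι] {q : ι → ℕ} {T : Finset ι} {k : ι → ℕ}

theorem mem_expBox : k ∈ expBox q T ↔ ∀ j, k j < if j ∈ T then q j else 1 := by
  simp [expBox]

theorem card_expBox : (expBox q T).card = ∏ j ∈ T, q j := by
  simp [expBox]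

theorem expBox_mono (hq : ∀ j, 0 < q j) {T' : Finset ι} (h : T ⊆ T') :
    expBox q T ⊆ expBox q T' := fun k hk ↦ by
  rw [mem_expBox] at hk ⊢
  intro j
  have hj := hk j
  have hqj := hq j
  have hT' := @h j
  grind

theorem sum_smul_expBox {G : Type*} [AddCommGroup G] (χ : AddChar G ℂ) (a : ι → G) :
    ∑ k ∈ expBox q T, χ (∑ j, k j • a j) =
      ∏ j, ∑ c ∈ Finset.range (if j ∈ T then q j else 1), χ (a j) ^ c := by
  rw [Finset.prod_univ_sum]
  refine Finset.sum_congr rfl fun k _ ↦ ?_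
  simp_rw [← AddChar.map_nsmul_eq_pow]
  exact map_prod χ.toMonoidHom (fun j ↦ Multiplicative.ofAdd (k j • a j)) Finset.univ

end expBox

open ArithmeticFunction in
theorem cardFactors_prod_primes {ι : Type*} (T : Finset ι) {q : ι → ℕ} (hq : ∀ j, (q j).Prime) :
    cardFactors (∏ j ∈ T, q j) = T.card := by
  classical
  induction T using Finset.induction_on with
  | empty => simp
  | insert i T hi ih =>
    rw [Finset.prod_insert hi, Finset.card_insert_of_notMem hi, cardFactors_mul (hq i).ne_zero
      (Finset.prod_ne_zero_iff.2 fun j _ ↦ (hq j).ne_zero), ih, cardFactors_apply_prime (hq i),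
      add_comm]

open ArithmeticFunction in
/-- In a factorization of a finite group into simplexes `{0, a j, …, (q j - 1) • a j}`, a subgroup
that contains the simplexes indexed by `T` and has at most `T.card` prime factors is their sum. -/
theorem mem_iff_of_cardFactors_le {G ι : Type*} [AddCommGroup G] [Finite G] [Fintype ι]
    [DecidableEq ι] {a : ι → G} {q : ι → ℕ} (hq : ∀ j, (q j).Prime)
    (hinj : Set.InjOn (fun k : ι → ℕ ↦ ∑ j, k j • a j) (expBox q Finset.univ))
    (hsurj : ∀ g, ∃ k ∈ expBox q Finset.univ, ∑ j, k j • a j = g) {T : Finset ι}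
    {B : AddSubgroup G} (haB : ∀ j ∈ T, a j ∈ B) (hB : cardFactors (Nat.card B) ≤ T.card) (g : G) :
    g ∈ B ↔ ∃ k ∈ expBox q T, ∑ j, k j • a j = g := by
  classical
  have hpos : ∀ j, 0 < q j := fun j ↦ (hq j).pos
  have hmem : ∀ k ∈ expBox q T, ∑ j, k j • a j ∈ B := fun k hk ↦ sum_mem fun j _ ↦ by
    by_cases hj : j ∈ T
    · exact nsmul_mem (haB j hj) _
    · have := mem_expBox.1 hk j
      rw [if_neg hj, Nat.lt_one_iff] at this
      simp [this]
  refine ⟨fun hg ↦ ?_, by rintro ⟨k, hk, rfl⟩; exact hmem k hk⟩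
  have hadd : ∀ k₁ k₂ : ι → ℕ, ∑ j, (k₁ + k₂) j • a j = ∑ j, k₁ j • a j + ∑ j, k₂ j • a j :=
    fun k₁ k₂ ↦ by simp [add_smul, Finset.sum_add_distrib]
  let X : Finset (ι → ℕ) := (expBox q Tᶜ).filter fun k ↦ ∑ j, k j • a j ∈ B
  let s : (ι → ℕ) → ι → ℕ := fun k j ↦ if j ∈ T then k j else 0
  let t : (ι → ℕ) → ι → ℕ := fun k j ↦ if j ∈ T then 0 else k j
  have hst : ∀ k, s k + t k = k := fun k ↦ by
    ext j
    by_cases hj : j ∈ T <;> simp [s, t, hj]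
  have hs : ∀ k ∈ expBox q Finset.univ, s k ∈ expBox q T := fun k hk ↦ by
    rw [mem_expBox] at hk ⊢
    intro j
    have := hk j
    by_cases hj : j ∈ T <;> simp_all [s]
  have ht : ∀ k ∈ expBox q Finset.univ, t k ∈ expBox q Tᶜ := fun k hk ↦ by
    rw [mem_expBox] at hk ⊢
    intro j
    have := hk j
    by_cases hj : j ∈ T <;> simp_all [t]
  have htX : ∀ k ∈ expBox q Finset.univ, ∑ j, k j • a j ∈ B → t k ∈ X := fun k hk hkB ↦ by
    refine Finset.mem_filter.2 ⟨ht k hk, ?_⟩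
    rw [← hst k, hadd] at hkB
    exact (B.add_mem_cancel_left (hmem _ (hs k hk))).1 hkB
  have hcard : Nat.card B = (∏ j ∈ T, q j) * X.card := by
    have hbox (k) (h : k ∈ expBox q T ×ˢ X) : k.1 + k.2 ∈ expBox q Finset.univ := by
      obtain ⟨h1, h2⟩ := Finset.mem_product.1 h
      have h2 := mem_expBox.1 (Finset.mem_filter.1 h2).1
      refine mem_expBox.2 fun j ↦ ?_
      have h1 := mem_expBox.1 h1 j
      have h2 := h2 j
      simp only [Finset.mem_compl, Finset.mem_univ, if_true, Pi.add_apply] at *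
      split_ifs at * <;> grind
    have hs_add (k) (h : k ∈ expBox q T ×ˢ X) : s (k.1 + k.2) = k.1 := by
      obtain ⟨h1, h2⟩ := Finset.mem_product.1 h
      have h2 := mem_expBox.1 (Finset.mem_filter.1 h2).1
      ext j
      have h1 := mem_expBox.1 h1 j
      have h2 := h2 j
      simp only [Finset.mem_compl, Pi.add_apply, s] at *
      grind
    rw [← card_expBox, ← Finset.card_product, ← Nat.card_eq_finsetCard]
    have hboxB (k : ↥(expBox q T ×ˢ X)) : ∑ j, (k.1.1 + k.1.2) j • a j ∈ B := by
      obtain ⟨h1, h2⟩ := Finset.mem_product.1 k.2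
      rw [hadd]
      exact add_mem (hmem _ h1) (Finset.mem_filter.1 h2).2
    refine (Nat.card_congr (Equiv.ofBijective (fun k ↦ ⟨_, hboxB k⟩)
      ⟨fun k l h ↦ ?_, fun b ↦ ?_⟩)).symm
    · have hkl := hinj (hbox _ k.2) (hbox _ l.2) (congrArg Subtype.val h)
      have h1 : k.1.1 = l.1.1 := by rw [← hs_add _ k.2, hkl, hs_add _ l.2]
      rw [h1] at hkl
      exact Subtype.ext (Prod.ext h1 (add_left_cancel hkl))
    · obtain ⟨k, hk, hkb⟩ := hsurj b
      refine ⟨⟨(s k, t k), Finset.mk_mem_product (hs k hk) (htX k hk (hkb ▸ b.2))⟩,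
        Subtype.ext ?_⟩
      simpa only [hst] using hkb
  have hX0 : (0 : ι → ℕ) ∈ X := by
    refine Finset.mem_filter.2 ⟨mem_expBox.2 fun j ↦ ?_, by simp⟩
    split_ifs
    · exact hpos j
    · exact one_pos
  have hX : X.card = 1 := by
    have hXne : X.card ≠ 0 := (Finset.card_pos.2 ⟨0, hX0⟩).ne'
    rw [hcard, cardFactors_mul (Finset.prod_ne_zero_iff.2 fun j _ ↦ (hq j).ne_zero) hXne,
      cardFactors_prod_primes T hq] at hB
    exact (cardFactors_eq_zero_iff_eq_zero_or_one.1 (by omega)).resolve_left hXne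
  obtain ⟨k, hk, rfl⟩ := hsurj g
  have h0 : t k = 0 := Finset.card_le_one.1 hX.le _ (htX k hk hg) _ hX0
  refine ⟨s k, hs k hk, ?_⟩
  rw [← hst k, h0, add_zero]
  simp [s]

/-- The induction behind `exists_smul_eq_zero_of_factorization`: a nonempty subfamily of the
simplexes sums to the subgroup `B`. -/
theorem exists_smul_eq_zero_of_isSum {G ι : Type*} [AddCommGroup G] [Finite G] [Fintype ι]
    [DecidableEq ι] {a : ι → G} {q : ι → ℕ} (hq : ∀ j, (q j).Prime)
    (hinj : Set.InjOn (fun k : ι → ℕ ↦ ∑ j, k j • a j) (expBox q Finset.univ))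
    (hsurj : ∀ g, ∃ k ∈ expBox q Finset.univ, ∑ j, k j • a j = g) (T : Finset ι) (hT : T.Nonempty)
    (B : AddSubgroup G) (hB : ∀ g, g ∈ B ↔ ∃ k ∈ expBox q T, ∑ j, k j • a j = g) :
    ∃ j, q j • a j = 0 := by
  classical
  induction T using Finset.strongInduction generalizing B with
  | H T ih =>
  obtain ⟨i, hi⟩ := hT
  have hTuniv : expBox q T ⊆ expBox q Finset.univ :=
    expBox_mono (fun j ↦ (hq j).pos) (Finset.subset_univ T)
  have hmul : q i • a i ∈ B := by
    refine nsmul_mem ((hB _).2 ⟨Pi.single i 1, mem_expBox.2 fun j ↦ ?_, ?_⟩) _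
    · have := (hq j).one_lt
      by_cases hj : j = i <;> grind
    · simp [Pi.single_apply]
  let K (j : ι) : Subgroup (AddChar G ℂ) :=
    if j = i then (AddChar.evalUnits (q i • a i)).ker else (AddChar.evalUnits (a j)).ker
  let C (j : ι) : Set (AddChar G ℂ) :=
    if j = i then {χ | AddChar.evalUnits (q i • a i) χ = 1}
    else {χ | AddChar.evalUnits (a j) χ ^ q j = 1 ∧ AddChar.evalUnits (a j) χ ≠ 1}
  have hCK (j : ι) : IsPiece (C j) (K j) := by
    by_cases hj : j = i
    · simpa [C, K, hj] using isPiece_ker (AddChar.evalUnits (q i • a i))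
    · simpa [C, K, hj] using isPiece_ker_pow_diff_ker (AddChar.evalUnits (a j)) (hq j)
  have hcover (χ : AddChar G ℂ) : ∃ j ∈ T, χ ∈ C j := by
    by_cases hχ : ∀ b ∈ B, χ b = 1
    · exact ⟨i, hi, by simpa [C, AddChar.evalUnits_eq_one] using hχ _ hmul⟩
    · have hsum : ∑ k ∈ expBox q T, χ (∑ j, k j • a j) = 0 := by
        have : Fintype B := Fintype.ofFinite B
        have hne : χ.compAddMonoidHom B.subtype ≠ 0 := fun h ↦ hχ fun b hb ↦
          DFunLike.congr_fun h (⟨b, hb⟩ : B)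
        rw [← AddChar.sum_eq_zero_iff_ne_zero.2 hne]
        refine Finset.sum_bij (fun k hk ↦ ⟨_, (hB _).2 ⟨k, hk, rfl⟩⟩) (fun _ _ ↦ Finset.mem_univ _)
          (fun k hk l hl h ↦ hinj (hTuniv hk) (hTuniv hl) (congrArg Subtype.val h))
          (fun b _ ↦ ?_) fun _ _ ↦ rfl
        obtain ⟨k, hk, hkb⟩ := (hB b).1 b.2
        exact ⟨k, hk, Subtype.ext hkb⟩
      rw [sum_smul_expBox, Finset.prod_eq_zero_iff] at hsum
      obtain ⟨j, -, hj⟩ := hsum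
      have hjT : j ∈ T := by
        by_contra h
        simp [h] at hj
      rw [if_pos hjT] at hj
      have hpow : χ (a j) ^ q j = 1 := by
        have := mul_geom_sum (χ (a j)) (q j)
        rw [hj, mul_zero] at this
        exact (sub_eq_zero.1 this.symm)
      have hne : χ (a j) ≠ 1 := fun h ↦ by simp [h, (hq j).ne_zero] at hj
      refine ⟨j, hjT, ?_⟩
      by_cases hji : j = i
      · subst hji
        simpa [C, AddChar.evalUnits_eq_one, AddChar.map_nsmul_eq_pow] using hpow
      · simpa [C, hji, AddChar.evalUnits_eq_one, AddChar.evalUnits_pow_eq_one] using ⟨hpow, hne⟩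
  obtain ⟨S, hST, hS⟩ := exists_isIrredundantCover (C := C) (x := 1) (L := ⊤) T
    fun χ _ ↦ by simpa using hcover χ
  have hiS : i ∈ S := by
    obtain ⟨j, hj, h1⟩ := hS.cover 1 (Subgroup.mem_top 1)
    by_contra hiS
    have hji : j ≠ i := by
      rintro rfl
      exact hiS hj
    simp [C, hji] at h1
  have hlt := hS.cardFactors_relIndex_lt hCK
  set T' := S.erase i with hT'
  have hcardT' : T'.card + 1 = S.card := Finset.card_erase_add_one hiS
  have hT'T : T' ⊂ T := (Finset.erase_ssubset hiS).trans_subset hST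
  set B' := AddSubgroup.closure (insert (q i • a i) (a '' T'))
  have hann (χ : AddChar G ℂ) : χ ∈ ⨅ j ∈ S, K j ↔ ∀ b ∈ B', χ b = 1 := by
    have hKi : χ ∈ K i ↔ χ (q i • a i) = 1 := by
      simp [K, MonoidHom.mem_ker, AddChar.evalUnits_eq_one]
    have hKj (j : ι) (hj : j ∈ T') : χ ∈ K j ↔ χ (a j) = 1 := by
      simp [K, (Finset.mem_erase.1 hj).1, MonoidHom.mem_ker, AddChar.evalUnits_eq_one]
    have hker : (∀ b ∈ B', χ b = 1) ↔ B' ≤ AddMonoidHom.ker χ.toAddMonoidHom := Iff.rfl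
    rw [hker, AddSubgroup.closure_le, Set.insert_subset_iff, Set.image_subset_iff,
      ← Finset.insert_erase hiS, ← hT']
    simp only [Subgroup.mem_iInf, Finset.forall_mem_insert, hKi]
    exact and_congr_right' (forall₂_congr hKj)
  rw [Subgroup.relIndex_top_right, AddChar.index_eq_card_of_annihilator B' _ hann] at hlt
  have hB' := mem_iff_of_cardFactors_le hq hinj hsurj (T := T') (B := B')
    (fun j hj ↦ AddSubgroup.subset_closure (Set.mem_insert_of_mem _ (Set.mem_image_of_mem a hj)))
    (by omega)
  rcases T'.eq_empty_or_nonempty with h | h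
  · obtain ⟨k, hk, hk'⟩ := (hB' (q i • a i)).1 (AddSubgroup.subset_closure (Set.mem_insert _ _))
    refine ⟨i, ?_⟩
    rw [← hk']
    refine Finset.sum_eq_zero fun j _ ↦ ?_
    have := mem_expBox.1 hk j
    rw [h, if_neg (Finset.notMem_empty j), Nat.lt_one_iff] at this
    rw [this, zero_smul]
  · exact ih T' hT'T h B' hB'

/-- **Hajós's theorem** for finite abelian groups, with simplexes of prime length. -/
theorem exists_smul_eq_zero_of_factorization {G ι : Type*} [AddCommGroup G] [Finite G] [Fintype ι]
    [DecidableEq ι] [Nonempty ι] {a : ι → G} {q : ι → ℕ} (hq : ∀ j, (q j).Prime)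
    (hinj : Set.InjOn (fun k : ι → ℕ ↦ ∑ j, k j • a j) (expBox q Finset.univ))
    (hsurj : ∀ g, ∃ k ∈ expBox q Finset.univ, ∑ j, k j • a j = g) : ∃ j, q j • a j = 0 :=
  exists_smul_eq_zero_of_isSum hq hinj hsurj Finset.univ Finset.univ_nonempty ⊤
    fun g ↦ by simpa using hsurj g

/-- Mixed radix expansion with respect to the prime factors of `N`. -/
theorem exists_prime_radix {N : ℕ} (hN : N ≠ 0) :
    ∃ (e : ℕ) (n w : Fin e → ℕ), (∀ t, (n t).Prime) ∧ ∏ t, n t = N ∧ (∀ t, n t * w t ∣ N) ∧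
      ∀ k < N, ∃ c : Fin e → ℕ, (∀ t, c t < n t) ∧ ∑ t, c t * w t = k := by
  induction N using induction_on_primes with
  | zero => exact absurd rfl hN
  | one => exact ⟨0, 0, 0, by simp, by simp, by simp, fun k hk ↦ ⟨0, by simp, by simp; omega⟩⟩
  | prime_mul p M hp ih =>
    obtain ⟨e, n, w, hn, hprod, hdvd, hc⟩ := ih (right_ne_zero_of_mul hN)
    refine ⟨e + 1, Fin.cons p n, Fin.cons 1 fun t ↦ p * w t, Fin.cases hp hn, ?_, ?_, ?_⟩
    · rw [Fin.prod_univ_succ, Fin.cons_zero]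
      simp [hprod]
    · refine Fin.cases (by simp) fun t ↦ ?_
      rw [Fin.cons_succ, Fin.cons_succ, mul_left_comm]
      exact Nat.mul_dvd_mul_left p (hdvd t)
    · intro k hk
      obtain ⟨c, hcn, hck⟩ := hc (k / p) (Nat.div_lt_of_lt_mul hk)
      refine ⟨Fin.cons (k % p) c, Fin.cases (Nat.mod_lt k hp.pos) hcn, ?_⟩
      simp only [Fin.sum_univ_succ, Fin.cons_zero, Fin.cons_succ, mul_left_comm (c _),
        ← Finset.mul_sum, hck]
      rw [mul_one, Nat.mod_add_div]

/-- If each nontrivial character kills one of the sums `∑ c < N, χ (c • a i)`, then all elements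
have equally many representations `∑ j, k j • a j` with `k j < N`. -/
theorem card_mul_card_fiber_expBox {G ι : Type*} [AddCommGroup G] [Finite G] [Fintype ι]
    [DecidableEq ι] [DecidableEq G] {a : ι → G} {N : ℕ}
    (h : ∀ χ : AddChar G ℂ, χ ≠ 1 → ∃ i, χ (a i) ^ N = 1 ∧ χ (a i) ≠ 1) (g : G) :
    Nat.card G * ((expBox (fun _ : ι ↦ N) Finset.univ).filter fun k ↦ ∑ j, k j • a j = g).card =
      N ^ Fintype.card ι := by
  have := Fintype.ofFinite G
  have key : ∑ k ∈ expBox (fun _ : ι ↦ N) Finset.univ, ∑ χ : AddChar G ℂ,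
      χ (∑ j, k j • a j - g) = (N : ℂ) ^ Fintype.card ι := by
    rw [Finset.sum_comm, Finset.sum_eq_single 1]
    · simp [card_expBox]
    · intro χ _ hχ
      obtain ⟨i, hi, hne⟩ := h χ hχ
      simp_rw [AddChar.map_sub_eq_div, ← Finset.sum_div]
      rw [sum_smul_expBox, Finset.prod_eq_zero (Finset.mem_univ i), zero_div]
      have hg := mul_geom_sum (χ (a i)) N
      rw [hi, sub_self, mul_eq_zero] at hg
      simpa using hg.resolve_left (sub_ne_zero.2 hne)
    · simp
  simp_rw [AddChar.sum_apply_eq_ite, sub_eq_zero, ← Finset.sum_filter, Finset.sum_const,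
    Fintype.card_eq_nat_card (α := G), nsmul_eq_mul] at key
  rw [mul_comm]
  exact_mod_cast key

/-- **Hajós's theorem** for finite abelian groups, with simplexes of equal length `N`; that they
factorize the group is expressed by characters. -/
theorem exists_smul_eq_zero_of_forall_addChar {G ι : Type*} [AddCommGroup G] [Finite G] [Fintype ι]
    [DecidableEq ι] [Nonempty ι] {a : ι → G} {N : ℕ} (hN : 1 < N)
    (h : ∀ χ : AddChar G ℂ, χ ≠ 1 → ∃ i, χ (a i) ^ N = 1 ∧ χ (a i) ≠ 1)
    (hcard : N ^ Fintype.card ι < 2 * Nat.card G) : ∃ i, N • a i = 0 := by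
  classical
  have hfib := card_mul_card_fiber_expBox h
  have hpos : 0 < N ^ Fintype.card ι := by positivity
  have hsurj (g : G) : ∃ k ∈ expBox (fun _ : ι ↦ N) Finset.univ, ∑ j, k j • a j = g := by
    have := hfib g
    obtain ⟨k, hk⟩ := Finset.card_pos.1 (Nat.pos_of_mul_pos_left (this ▸ hpos))
    exact ⟨k, Finset.mem_filter.1 hk⟩
  have hG : Nat.card G = N ^ Fintype.card ι := by
    have h0 := hfib 0
    generalize Finset.card _ = c at h0
    have : c = 1 := by
      have h2 : c < 2 := by
        by_contra! hc
        nlinarith [Nat.mul_le_mul_left (Nat.card G) hc]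
      have h1 : c ≠ 0 := by
        rintro rfl
        omega
      omega
    rw [← h0, this, mul_one]
  obtain ⟨e, n, w, hn, hprod, hdvd, hdigits⟩ := exists_prime_radix (by omega : N ≠ 0)
  have he : Nonempty (Fin e) := by
    by_contra! he
    simp at hprod
    omega
  have hsurj' (g : G) : ∃ k ∈ expBox (fun j : ι × Fin e ↦ n j.2) Finset.univ,
      ∑ j, k j • w j.2 • a j.1 = g := by
    obtain ⟨k, hk, rfl⟩ := hsurj g
    choose c hc hck using fun i ↦ hdigits (k i) (by simpa using mem_expBox.1 hk i)
    refine ⟨fun j ↦ c j.1 j.2, mem_expBox.2 fun j ↦ by simpa using hc j.1 j.2, ?_⟩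
    rw [Fintype.sum_prod_type]
    refine Finset.sum_congr rfl fun i _ ↦ ?_
    simp_rw [← hck i, Finset.sum_smul, mul_smul]
  have hinj' : Set.InjOn (fun k : ι × Fin e → ℕ ↦ ∑ j, k j • w j.2 • a j.1)
      (expBox (fun j : ι × Fin e ↦ n j.2) Finset.univ) := by
    have := Fintype.ofFinite G
    refine Finset.injOn_of_surjOn_of_card_le (t := Finset.univ) _
      (fun _ _ ↦ Finset.mem_coe.2 (Finset.mem_univ _)) (fun g _ ↦ hsurj' g) ?_
    rw [card_expBox, Finset.card_univ, Fintype.card_eq_nat_card, hG, Fintype.prod_prod_type]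
    simp [hprod]
  obtain ⟨j, hj⟩ := exists_smul_eq_zero_of_factorization (a := fun j : ι × Fin e ↦ w j.2 • a j.1)
    (q := fun j ↦ n j.2) (fun j ↦ hn j.2) hinj' hsurj'
  obtain ⟨m, hm⟩ := hdvd j.2
  refine ⟨j.1, ?_⟩
  rw [smul_smul] at hj
  rw [hm, mul_comm, mul_smul, hj, smul_zero]

theorem Matrix.exists_int_smul_eq {ι : Type*} [Fintype ι] (A : Matrix ι ι ℚ) :
    ∃ (N : ℕ) (B : Matrix ι ι ℤ), 1 < N ∧ (B.map (fun z : ℤ ↦ (z : ℚ))) = (N : ℚ) • A := by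
  let D : ℕ := ∏ p : ι × ι, (A p.1 p.2).den
  have hD : 0 < D := Finset.prod_pos fun p _ ↦ (A p.1 p.2).den_pos
  have h (i j : ι) : ∃ z : ℤ, (z : ℚ) = (2 * D : ℕ) * A i j := by
    obtain ⟨c, hc⟩ : (A i j).den ∣ D :=
      Finset.dvd_prod_of_mem (fun p : ι × ι ↦ (A p.1 p.2).den) (Finset.mem_univ (i, j))
    refine ⟨2 * c * (A i j).num, ?_⟩
    rw [hc]
    push_cast
    rw [← Rat.mul_den_eq_num (A i j)]
    ring
  choose B hB using h
  exact ⟨2 * D, B, by omega, Matrix.ext hB⟩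

theorem AddChar.exists_pow_eq {G : Type*} [AddCommGroup G] [Finite G] {ζ : ℂ}
    (hζ : IsPrimitiveRoot ζ (Nat.card G)) (χ : AddChar G ℂ) (g : G) :
    ∃ t < Nat.card G, ζ ^ t = χ g :=
  hζ.eq_pow_of_pow_eq_one <| by
    rw [← map_nsmul_eq_pow, card_nsmul_eq_zero', map_zero_eq_one]

theorem AddChar.apply_sum_zsmul {G ι : Type*} [AddCommGroup G] [Fintype ι] (χ : AddChar G ℂ)
    {a : ι → G} {ζ : ℂ} (hζ : ζ ≠ 0) {t : ι → ℕ} (ht : ∀ i, ζ ^ t i = χ (a i)) (x : ι → ℤ) :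
    χ (∑ i, x i • a i) = ζ ^ ∑ i, t i * x i := by
  have h : χ (∑ i, x i • a i) = ∏ i, χ (x i • a i) :=
    map_prod χ.toMonoidHom (fun i ↦ Multiplicative.ofAdd (x i • a i)) Finset.univ
  simp_rw [h, map_zsmul_eq_zpow, ← ht, ← zpow_natCast, ← zpow_mul]
  induction (Finset.univ : Finset ι) using Finset.cons_induction with
  | empty => simp
  | cons i s hi ih => rw [Finset.prod_cons, Finset.sum_cons, zpow_add₀ hζ, ih]

open Matrix in
/-- A rational system of linear forms with determinant less than `2` that takes a nonzero integer
value at each nonzero integer vector contains a form with integer coefficients. -/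
theorem exists_row_int_of_rat {ι : Type*} [Fintype ι] [DecidableEq ι] [Nonempty ι]
    {L : Matrix ι ι ℚ} (h0 : L.det ≠ 0) (h2 : |L.det| < 2)
    (hL : ∀ v : ι → ℤ, v ≠ 0 → ∃ i, ∃ m : ℤ, m ≠ 0 ∧ (L *ᵥ fun j ↦ (v j : ℚ)) i = m) :
    ∃ i, ∃ w : ι → ℤ, ∀ j, L i j = w j := by
  obtain ⟨N, B, hN, hB⟩ := (L⁻¹)ᵀ.exists_int_smul_eq
  have hN0 : (N : ℚ) ≠ 0 := by positivity
  have hLB : Lᵀ * B.map (fun z : ℤ ↦ (z : ℚ)) = (N : ℚ) • (1 : Matrix ι ι ℚ) := by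
    rw [hB, mul_smul_comm, ← transpose_mul, nonsing_inv_mul _ (isUnit_iff_ne_zero.2 h0),
      transpose_one]
  have hdet : L.det * (B.det : ℚ) = (N : ℚ) ^ Fintype.card ι := by
    have := congrArg Matrix.det hLB
    rw [det_mul, det_transpose, det_smul, det_one, mul_one] at this
    rw [← this]
    congr 1
    exact (Int.castRingHom ℚ).map_det B
  have hBdet : B.det ≠ 0 := fun h ↦ by
    rw [h, Int.cast_zero, mul_zero] at hdet
    exact pow_ne_zero _ hN0 hdet.symm
  have hinj : Function.Injective B.mulVecLin :=
    LinearMap.ker_eq_bot.1 <| LinearMap.ker_eq_bot'.2 fun _ ↦ eq_zero_of_mulVec_eq_zero hBdet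
  let G := (ι → ℤ) ⧸ LinearMap.range B.mulVecLin
  have hcardG : Nat.card G = B.det.natAbs := by
    rw [← Submodule.natAbs_det_equiv _ (LinearEquiv.ofInjective B.mulVecLin hinj)]
    congr 1
    rw [← LinearMap.det_toLin']
    congr 1
  have hG : Finite G := Nat.finite_of_card_ne_zero (by simpa [hcardG])
  let a (i : ι) : G := Submodule.Quotient.mk (Pi.single i 1)
  have ha (x : ι → ℤ) : ∑ i, x i • a i = Submodule.Quotient.mk x := by
    conv_rhs => rw [← Finset.univ_sum_single x, ← Submodule.mkQ_apply, map_sum]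
    refine Finset.sum_congr rfl fun i _ ↦ ?_
    have : Pi.single i (x i) = x i • (Pi.single i 1 : ι → ℤ) := by simp [← Pi.single_smul']
    rw [this, map_smul]
    rfl
  have hζ := Complex.isPrimitiveRoot_exp (Nat.card G) Nat.card_pos.ne'
  set ζ := Complex.exp (2 * Real.pi * Complex.I / Nat.card G)
  obtain ⟨i, hi⟩ : ∃ i, N • a i = 0 := by
    refine exists_smul_eq_zero_of_forall_addChar hN (fun χ hχ ↦ ?_) ?_
    · choose t ht hχt using fun i ↦ AddChar.exists_pow_eq hζ χ (a i)
      have hχx (x : ι → ℤ) : χ (Submodule.Quotient.mk x) = ζ ^ ∑ i, t i * x i := by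
        rw [← ha, AddChar.apply_sum_zsmul χ (hζ.ne_zero Nat.card_pos.ne') hχt]
      have hv (j : ι) : ∃ z : ℤ, ∑ i, t i * B i j = Nat.card G * z := by
        have h1 : (Submodule.Quotient.mk (B *ᵥ Pi.single j 1) : G) = 0 :=
          (Submodule.Quotient.mk_eq_zero _).2 ⟨_, rfl⟩
        have h2 := hχx (B *ᵥ Pi.single j 1)
        rw [h1, AddChar.map_zero_eq_one, eq_comm, hζ.zpow_eq_one_iff_dvd] at h2
        obtain ⟨z, hz⟩ := h2
        exact ⟨z, by simpa using hz⟩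
      choose v hv using hv
      have hNt (i : ι) : (N : ℚ) * t i = Nat.card G * (L *ᵥ fun j ↦ (v j : ℚ)) i := by
        have h1 : (B.map (fun z : ℤ ↦ (z : ℚ)))ᵀ *ᵥ (fun i ↦ (t i : ℚ)) =
            (Nat.card G : ℚ) • fun j ↦ (v j : ℚ) := by
          ext j
          have := congrArg (Int.cast : ℤ → ℚ) (hv j)
          push_cast at this
          simpa [mulVec, dotProduct, mul_comm] using this
        have h2 := congrArg (L *ᵥ ·) h1
        have h3 : L * (B.map (fun z : ℤ ↦ (z : ℚ)))ᵀ = (N : ℚ) • (1 : Matrix ι ι ℚ) := by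
          rw [hB, transpose_smul, transpose_transpose, mul_smul_comm,
            mul_nonsing_inv _ (isUnit_iff_ne_zero.2 h0)]
        simp only [mulVec_mulVec, h3, mulVec_smul, smul_mulVec, one_mulVec] at h2
        exact congrFun h2 i
      have hv0 : v ≠ 0 := by
        rintro rfl
        refine hχ (AddChar.ext _ _ fun g ↦ ?_)
        obtain ⟨x, rfl⟩ := Submodule.Quotient.mk_surjective _ g
        have ht0 (i : ι) : t i = 0 := by simpa [hN0, mulVec, dotProduct] using hNt i
        rw [hχx]
        simp [ht0]
      obtain ⟨i, m, hm, hi⟩ := hL v hv0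
      have hNti : (N * t i : ℤ) = Nat.card G * m := by
        have := hNt i
        rw [hi] at this
        exact_mod_cast this
      refine ⟨i, ?_, fun h1 ↦ ?_⟩
      · rw [← hχt, ← pow_mul, ← zpow_natCast, hζ.zpow_eq_one_iff_dvd]
        exact ⟨m, by rw [← hNti]; push_cast; ring⟩
      · rw [← hχt, hζ.pow_eq_one_iff_dvd] at h1
        have hti := Nat.eq_zero_of_dvd_of_lt h1 (ht i)
        rw [hti, Nat.cast_zero, mul_zero, eq_comm, mul_eq_zero] at hNti
        exact hNti.elim (fun h ↦ Nat.card_pos.ne' (Int.natCast_eq_zero.1 h)) hm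
    · have h3 : (N : ℚ) ^ Fintype.card ι < 2 * Nat.card G := by
        rw [hcardG, Nat.cast_natAbs, Int.cast_abs,
          ← abs_of_nonneg (by positivity : 0 ≤ (N : ℚ) ^ _),
          ← hdet, abs_mul]
        have : (B.det : ℚ) ≠ 0 := Int.cast_ne_zero.2 hBdet
        gcongr
      exact_mod_cast h3
  obtain ⟨w, hw⟩ := (Submodule.Quotient.mk_eq_zero _ (x := N • Pi.single i 1)).1 hi
  refine ⟨i, w, fun j ↦ ?_⟩
  have hw' : B.map (fun z : ℤ ↦ (z : ℚ)) *ᵥ (fun j ↦ (w j : ℚ)) = (N : ℚ) • Pi.single i 1 := by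
    ext k
    have := congrArg (Int.cast : ℤ → ℚ) (congrFun hw k)
    simpa [mulVec, dotProduct, Pi.single_apply] using this
  have h1 := congrArg (Lᵀ *ᵥ ·) hw'
  simp only [mulVec_mulVec, hLB, mulVec_smul, smul_mulVec, one_mulVec] at h1
  have h2 := congrFun (smul_right_injective _ hN0 h1) j
  simpa using h2.symm

open Filter Topology in
/-- The identity of `ℝ` is a pointwise limit of `ℚ`-linear projections onto `ℚ`. -/
theorem exists_linearMap_rat_tendsto : ∃ φ : ℕ → ℝ →ₗ[ℚ] ℚ,
    (∀ n, φ n 1 = 1) ∧ ∀ x : ℝ, Tendsto (fun n ↦ (φ n x : ℝ)) atTop (𝓝 x) := by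
  have h1 : LinearIndepOn ℚ id {(1 : ℝ)} := .singleton one_ne_zero
  let b := Module.Basis.extend h1
  let φ (n : ℕ) : ℝ →ₗ[ℚ] ℚ := b.constr ℚ fun j ↦ (⌊((n : ℝ) + 1) * j⌋ : ℚ) / (n + 1)
  have hφ (n) (j) : φ n (b j) = (⌊((n : ℝ) + 1) * j⌋ : ℚ) / (n + 1) := b.constr_basis ℚ _ j
  refine ⟨φ, fun n ↦ ?_, fun x ↦ ?_⟩
  · have hb : b ⟨1, h1.subset_extend _ rfl⟩ = 1 := Module.Basis.extend_apply_self h1 _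
    rw [← hb, hφ, mul_one]
    have : ⌊(n : ℝ) + 1⌋ = (n : ℤ) + 1 := by simp
    rw [this]
    push_cast
    exact div_self (by positivity)
  · induction b.mem_span x using Submodule.span_induction with
    | mem x hx =>
      obtain ⟨j, rfl⟩ := hx
      simp_rw [hφ]
      rw [show b j = j from Module.Basis.extend_apply_self h1 j]
      have hlim : Tendsto (fun n : ℕ ↦ (j : ℝ) - 1 / ((n : ℝ) + 1)) atTop (𝓝 j) := by
        simpa using tendsto_one_div_add_atTop_nhds_zero_nat.const_sub (j : ℝ)
      refine tendsto_of_tendsto_of_tendsto_of_le_of_le hlim tendsto_const_nhds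
        (fun n ↦ ?_) fun n ↦ ?_
      · have hn : (0 : ℝ) < n + 1 := by positivity
        push_cast
        rw [le_div_iff₀ hn, sub_mul, one_div_mul_cancel hn.ne', mul_comm]
        exact (Int.sub_one_lt_floor _).le
      · have hn : (0 : ℝ) < n + 1 := by positivity
        push_cast
        rw [div_le_iff₀ hn, mul_comm]
        exact Int.floor_le _
    | zero => simp
    | add x y _ _ hx hy => simpa using hx.add hy
    | smul c x _ hx =>
      simp_rw [map_smul, smul_eq_mul, Rat.cast_mul, Rat.smul_def]
      exact hx.const_mul (c : ℝ)

open Matrix Filter Topology in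
/-- A real system of linear forms with determinant `1` that takes a nonzero integer
value at each nonzero integer vector contains a form with integer coefficients. -/
theorem exists_row_int_of_real {ι : Type*} [Fintype ι] [DecidableEq ι] [Nonempty ι]
    {L : Matrix ι ι ℝ} (hdet : L.det = 1)
    (hL : ∀ v : ι → ℤ, v ≠ 0 → ∃ i, ∃ m : ℤ, m ≠ 0 ∧ (L *ᵥ fun j ↦ (v j : ℝ)) i = m) :
    ∃ i, ∃ w : ι → ℤ, ∀ j, L i j = w j := by
  obtain ⟨φ, hφ1, hφ⟩ := exists_linearMap_rat_tendsto
  have hφint (n : ℕ) (m : ℤ) : φ n m = m := by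
    have := map_zsmul (φ n) m 1
    simpa [hφ1] using this
  by_contra! h
  have h' (i : ι) : ∃ j, L i j ∉ Set.range ((↑) : ℤ → ℝ) := by
    by_contra! hi
    choose w hw using hi
    obtain ⟨j, hj⟩ := h i w
    exact hj (hw j).symm
  choose j hj using h'
  have hev1 : ∀ᶠ n in atTop, ∀ i, (φ n (L i (j i)) : ℝ) ∉ Set.range ((↑) : ℤ → ℝ) :=
    eventually_all.2 fun i ↦
      (hφ _).eventually (Int.isClosedEmbedding_coe_real.isClosed_range.isOpen_compl.mem_nhds (hj i))
  have hlim : Tendsto (fun n ↦ ((L.map (φ n)).det : ℝ)) atTop (𝓝 1) := by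
    have : Tendsto (fun n ↦ (L.map fun x ↦ (φ n x : ℝ)).det) atTop (𝓝 L.det) :=
      ((continuous_id.matrix_det).tendsto L).comp
        (tendsto_pi_nhds.2 fun i ↦ tendsto_pi_nhds.2 fun j ↦ hφ (L i j))
    rw [hdet] at this
    refine this.congr fun n ↦ ?_
    exact ((Rat.castHom ℝ).map_det (L.map (φ n))).symm
  obtain ⟨n, hn, hn0, hn2⟩ := (hev1.and ((hlim.eventually (lt_mem_nhds one_pos)).and
    (hlim.eventually (gt_mem_nhds one_lt_two)))).exists
  have hpos : 0 < (L.map (φ n)).det := by exact_mod_cast hn0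
  obtain ⟨i, w, hw⟩ := exists_row_int_of_rat hpos.ne'
    (by rw [abs_of_pos hpos]; exact_mod_cast hn2) fun v hv ↦ by
      obtain ⟨i, m, hm, hi⟩ := hL v hv
      refine ⟨i, m, hm, ?_⟩
      rw [← hφint n m, ← hi]
      simp only [mulVec, dotProduct, map_sum, Matrix.map_apply]
      refine Finset.sum_congr rfl fun k _ ↦ ?_
      have := map_zsmul (φ n) (v k) (L i k)
      simpa [mul_comm] using this.symm
  exact hn i ⟨w (j i), by exact_mod_cast (hw (j i)).symm⟩

open MeasureTheory Pointwise in
/-- A set with disjoint translates that is as large as a fundamental domain is a fundamental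
domain. -/
theorem MeasureTheory.IsAddFundamentalDomain.of_measure_le {G α : Type*} [AddGroup G] [Countable G]
    [AddAction G α] [MeasurableSpace α] {μ : Measure α} [MeasurableConstVAdd G α]
    [VAddInvariantMeasure G α μ] {s t : Set α} (hs : IsAddFundamentalDomain G s μ)
    (ht : MeasurableSet t) (hdisj : Pairwise fun g h : G ↦ Disjoint (g +ᵥ t) (h +ᵥ t))
    (hle : μ s ≤ μ t) (hfin : μ s ≠ ⊤) : IsAddFundamentalDomain G t μ := by
  have htg (g : G) : MeasurableSet (g +ᵥ t) := ht.const_vadd g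
  have hU : MeasurableSet (⋃ g : G, g +ᵥ t) := .iUnion htg
  have hUs : μ t = μ (s ∩ ⋃ g : G, g +ᵥ t) := by
    rw [hs.measure_eq_tsum t, Set.inter_comm, ← Measure.restrict_apply hU,
      measure_iUnion hdisj htg]
    exact tsum_congr fun g ↦ (Measure.restrict_apply (htg g)).symm
  have hdiff : μ (s \ ⋃ g : G, g +ᵥ t) = 0 := by
    have h1 := measure_inter_add_sdiff (μ := μ) s hU
    have h2 : μ (s ∩ ⋃ g : G, g +ᵥ t) = μ s :=
      le_antisymm (measure_mono Set.inter_subset_left) (hUs ▸ hle)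
    rw [h2] at h1
    exact (ENNReal.add_right_inj hfin).1 (h1.trans (add_zero _).symm)
  have hnull : μ (⋃ g : G, g +ᵥ t)ᶜ = 0 := by
    refine hs.measure_zero_of_invariant _ (fun g ↦ ?_) (by rwa [Set.inter_comm, ← Set.sdiff_eq])
    rw [Set.vadd_set_compl, Set.vadd_set_iUnion]
    simp_rw [vadd_vadd]
    exact congrArg _ ((Equiv.addLeft g).surjective.iUnion_comp fun h ↦ h +ᵥ t)
  refine ⟨ht.nullMeasurableSet, ?_, fun g h hgh ↦ (hdisj hgh).aedisjoint⟩
  rw [ae_iff]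
  refine measure_mono_null (Set.subset_compl_comm.1 fun x hxU hx ↦ hx ?_) hnull
  obtain ⟨g, hg⟩ := Set.mem_iUnion.1 hxU
  exact ⟨-g, Set.mem_vadd_set_iff_neg_vadd_mem.1 hg⟩

open MeasureTheory in
theorem exists_int_of_integral_exp_eq_zero {ι : Type*} [Fintype ι] {ξ : ι → ℝ}
    (h : ∫ x in Set.univ.pi fun _ : ι ↦ Set.Ico (0 : ℝ) 1,
      Complex.exp (∑ i, 2 * Real.pi * Complex.I * ξ i * x i) = 0) :
    ∃ i, ∃ m : ℤ, m ≠ 0 ∧ ξ i = m := by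
  simp_rw [Complex.exp_sum] at h
  rw [volume_pi, Measure.restrict_pi_pi, integral_fintype_prod_eq_prod
    (f := fun i (x : ℝ) ↦ Complex.exp (2 * Real.pi * Complex.I * ξ i * x)),
    Finset.prod_eq_zero_iff] at h
  obtain ⟨i, -, hi⟩ := h
  rw [integral_Ico_eq_integral_Ioc, ← intervalIntegral.integral_of_le zero_le_one] at hi
  have hξ : ξ i ≠ 0 := fun h ↦ by simp [h] at hi
  have hc : 2 * Real.pi * Complex.I * ξ i ≠ 0 := by simp [hξ, Real.pi_ne_zero]
  rw [integral_exp_mul_complex hc, div_eq_zero_iff, or_iff_left hc, sub_eq_zero] at hi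
  simp only [Complex.ofReal_zero, Complex.ofReal_one, mul_one, mul_zero, Complex.exp_zero,
    Complex.exp_eq_one_iff] at hi
  obtain ⟨m, hm⟩ := hi
  have hm' : (ξ i : ℂ) = m := by
    rw [mul_comm] at hm
    exact mul_right_cancel₀ Complex.two_pi_I_ne_zero hm
  have hξm : ξ i = m := by exact_mod_cast hm'
  exact ⟨i, m, by rintro rfl; simp [hξm] at hξ, hξm⟩

open MeasureTheory Pointwise in
/-- If a unimodular lattice has no nonzero point in the open cube, so that the unit cube is a
fundamental domain, then each nonzero vector of the dual lattice has a nonzero integer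
coordinate. -/
theorem exists_int_of_forall_dotProduct {ι : Type*} [Fintype ι] [DecidableEq ι]
    (b : Module.Basis ι ℝ (ι → ℝ)) (hdet : |(Matrix.of b).det| = 1)
    (hcube : ∀ x ∈ Submodule.span ℤ (Set.range b), (∀ k, |x k| < 1) → x = 0) {ξ : ι → ℝ}
    (hξ : ξ ≠ 0) (hb : ∀ i, ∃ m : ℤ, ξ ⬝ᵥ b i = m) : ∃ i, ∃ m : ℤ, m ≠ 0 ∧ ξ i = m := by
  refine exists_int_of_integral_exp_eq_zero ?_
  set f : (ι → ℝ) → ℂ := fun x ↦ Complex.exp (∑ i, 2 * Real.pi * Complex.I * ξ i * x i) with hf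
  set Q : Set (ι → ℝ) := Set.univ.pi fun _ ↦ Set.Ico 0 1
  have hf_eq (x : ι → ℝ) : f x = Complex.exp (2 * Real.pi * Complex.I * (ξ ⬝ᵥ x : ℝ)) := by
    simp [hf, dotProduct, Finset.mul_sum, mul_assoc]
  have hf_add (x y : ι → ℝ) : f (x + y) = f x * f y := by
    rw [hf_eq, hf_eq, hf_eq, ← Complex.exp_add, dotProduct_add]
    push_cast
    ring_nf
  have hf_inv (g : (Submodule.span ℤ (Set.range b)).toAddSubgroup) (x : ι → ℝ) :
      f (g +ᵥ x) = f x := by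
    have hg : ∃ m : ℤ, ξ ⬝ᵥ (g : ι → ℝ) = m := by
      obtain ⟨g, hg⟩ := g
      induction hg using Submodule.span_induction with
      | mem x hx =>
        obtain ⟨i, rfl⟩ := hx
        exact hb i
      | zero => exact ⟨0, by simp⟩
      | add x y _ _ hx hy =>
        obtain ⟨m, hm⟩ := hx
        obtain ⟨n, hn⟩ := hy
        exact ⟨m + n, by rw [dotProduct_add, hm, hn, Int.cast_add]⟩
      | smul c x _ hx =>
        obtain ⟨m, hm⟩ := hx
        exact ⟨c * m, by rw [dotProduct_smul, hm, zsmul_eq_mul, Int.cast_mul]⟩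
    obtain ⟨m, hm⟩ := hg
    have h1 : f g = 1 := by
      rw [hf_eq, hm, Complex.exp_eq_one_iff]
      exact ⟨m, by push_cast; ring⟩
    rw [AddSubgroup.vadd_def, vadd_eq_add, hf_add, h1, one_mul]
  have hdom := ZSpan.isAddFundamentalDomain' b volume
  have hvol : volume (ZSpan.fundamentalDomain b) = 1 := by
    rw [ZSpan.volume_fundamentalDomain, hdet, ENNReal.ofReal_one]
  have : Countable (Submodule.span ℤ (Set.range b)).toAddSubgroup :=
    inferInstanceAs (Countable (Submodule.span ℤ (Set.range b)))
  have hQdom : IsAddFundamentalDomain (Submodule.span ℤ (Set.range b)).toAddSubgroup Q volume := by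
    refine hdom.of_measure_le (.univ_pi fun _ ↦ measurableSet_Ico) (fun g h hgh ↦ ?_) ?_
      (by simp [hvol])
    · refine Set.disjoint_left.2 fun x hx hx' ↦ hgh ?_
      obtain ⟨y, hy, rfl⟩ := hx
      obtain ⟨z, hz, hyz⟩ := hx'
      simp only [AddSubgroup.vadd_def, vadd_eq_add] at hyz
      refine Subtype.ext (sub_eq_zero.1 (hcube _ (sub_mem g.2 h.2) fun k ↦ ?_))
      have h1 := hy k (Set.mem_univ k)
      have h2 := hz k (Set.mem_univ k)
      have h3 := congrFun hyz k
      simp only [Pi.add_apply, Pi.sub_apply, Set.mem_Ico, abs_lt] at *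
      constructor <;> linarith
    · simp [hvol, Q, Real.volume_pi_Ico]
  obtain ⟨j, hj⟩ := Function.ne_iff.1 hξ
  let t : ι → ℝ := Pi.single j (1 / (2 * ξ j))
  have ht : f t = -1 := by
    have : ξ ⬝ᵥ t = 1 / 2 := by
      rw [dotProduct_single, one_div, mul_inv, mul_left_comm, mul_inv_cancel₀ hj, mul_one, one_div]
    rw [hf_eq, this, ← Complex.exp_pi_mul_I]
    push_cast
    ring_nf
  have h1 : ∫ x in t +ᵥ Q, f x = f t * ∫ x in Q, f x := by
    rw [← integral_const_mul]
    simp_rw [← hf_add]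
    exact (measurePreserving_add_left volume t).setIntegral_image_emb
      (measurableEmbedding_addLeft t) f Q
  have h2 := hQdom.setIntegral_eq (hQdom.vadd_of_comm t) hf_inv
  rw [h1, ht] at h2
  linear_combination h2 / 2

/-- Hajós's theorem: a unimodular lattice in ℝ^d whose only point in the open
cube (−1,1)^d is the origin contains some standard basis vector. -/
theorem stmt7 (d : ℕ) (hd : 0 < d) (Λ : Set (Fin d → ℝ))
    (hΛ : IsUnimodularLattice d Λ)
    (hcube : ∀ x ∈ Λ, (∀ k, |x k| < 1) → x = 0) :
    ∃ i : Fin d, Pi.single i (1 : ℝ) ∈ Λ := by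
  obtain ⟨g, hg, rfl⟩ := hΛ
  have : Nonempty (Fin d) := ⟨⟨0, hd⟩⟩
  have hunit : IsUnit g.det := hg ▸ isUnit_one
  let b : Module.Basis (Fin d) ℝ (Fin d → ℝ) :=
    (Pi.basisFun ℝ (Fin d)).map (g.toLinearEquiv' (g.invertibleOfIsUnitDet hunit))
  have hb (i : Fin d) : b i = g.col i := by simp [b, Matrix.toLinearEquiv']
  have hbdet : |(Matrix.of b).det| = 1 := by
    have : Matrix.of b = g.transpose := by
      ext i j
      simp [hb]
    rw [this, Matrix.det_transpose, hg, abs_one]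
  have hdet : (g⁻¹.transpose).det = 1 := by
    rw [Matrix.det_transpose, Matrix.det_nonsing_inv, hg, Ring.inverse_one]
  obtain ⟨i, w, hw⟩ := exists_row_int_of_real hdet fun v hv ↦ by
    have hmul (y : Fin d → ℝ) : Matrix.vecMul (g⁻¹.transpose.mulVec y) g = y := by
      rw [Matrix.mulVec_transpose, Matrix.vecMul_vecMul, Matrix.nonsing_inv_mul _ hunit,
        Matrix.vecMul_one]
    refine exists_int_of_forall_dotProduct b hbdet (fun x hx ↦ hcube x ?_) (fun h ↦ hv ?_)
      fun i ↦ ⟨v i, ?_⟩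
    · obtain ⟨c, rfl⟩ := Submodule.mem_span_range_iff_exists_fun ℤ |>.1 hx
      refine ⟨c, ?_⟩
      ext k
      simp [hb, Matrix.mulVec, dotProduct, mul_comm]
    · have h1 := hmul fun j ↦ (v j : ℝ)
      rw [h, Matrix.zero_vecMul] at h1
      ext j
      simpa using (congrFun h1 j).symm
    · rw [hb]
      exact congrFun (hmul fun j ↦ (v j : ℝ)) i
  refine ⟨i, w, ?_⟩
  have h1 : (fun j ↦ (w j : ℝ)) = g⁻¹.mulVec (Pi.single i 1) := by
    ext j
    simp [← hw]
  rw [h1, Matrix.mulVec_mulVec, Matrix.mul_nonsing_inv _ hunit, Matrix.one_mulVec]
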